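/- arXiv:1212.0216 — 4 statements merged into one kernel-verified Lean document; each statement's English description precedes it below -/
import Mathlib

section
/- Write tr(γ) = a + b√(−d) with a, b ∈ ℤ. There exists an integer n ≥ 1 such that both eigenvalues of γⁿ (viewed as a matrix in SL_2(ℂ)) are real, if and only if there exists k ∈ {0,1,2,3,4} such that (4−k)·a² − k·d·b² = k·(4−k). -/
/-!
Let `l, l⁻¹` be the eigenvalues of `γ` and `N = |l|²`. Comparing real and imaginary parts in
`l + l⁻¹ = a + b√(-d)` shows that the Pell equation, a monic integer quadratic in `k`, has the
roots `k₀ = 4 (Re l)² / N = 2 + u + u⁻¹` with `u = l / conj l`, and `K = (N + 1)² / N = 2 + N + N⁻¹`.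
Moreover `lᵐ` is real exactly when `uᵐ = 1`, and `0 ≤ k₀ ≤ 4 ≤ K`.

If `uᵐ = 1`, then `k₀ - 2` is a root of the integer polynomial `Cₘ - 2`, where `Cₘ` is the rescaled
Chebyshev polynomial with `Cₘ(z + z⁻¹) = zᵐ + z⁻ᵐ`. If `k₀` were not an integer it would be
irrational with conjugate `K`, so that `Nᵐ + N⁻ᵐ = 2`, i.e. `N = 1`; but then `k₀ = a²`. So `k₀`
is an integer in `[0, 4]` solving the equation.

Conversely let `k ∈ {0, …, 4}` be a solution. If `k = k₀`, then `u² - (k - 2) u + 1 = 0` gives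
`u¹² = 1`. If `k = K`, then `N = 1`, hence `l² - a l + 1 = 0` with `|a| ≤ 2` and `l¹² = 1`. In both
cases `l¹²` is real.
-/

open Matrix Pointwise

/-- `G = SL_2(ℂ)`. -/
abbrev SL2C := Matrix.SpecialLinearGroup (Fin 2) ℂ

/-- The standard topology on `SL_2(ℂ)`, as a subspace of the matrices. -/
instance : TopologicalSpace SL2C :=
  inferInstanceAs (TopologicalSpace {A : Matrix (Fin 2) (Fin 2) ℂ // A.det = 1})

/-- The order `𝒪 = ℤ[√(-d)]`, embedded in `ℂ` by sending `√(-d)` to `i√d`: the subring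
of `ℂ` generated by `i√d`. -/
noncomputable def Od (d : ℕ) : Subring ℂ := Subring.closure {Complex.I * Real.sqrt d}

/-- `Γ = SL_2(𝒪)`, the subgroup of `SL_2(ℂ)` of matrices with entries in `𝒪 = ℤ[√(-d)]`. -/
noncomputable def GammaO (d : ℕ) : Subgroup SL2C where
  carrier := {g | ∀ i j, g.1 i j ∈ Od d}
  one_mem' := by
    intro i j
    show ((1 : SL2C) : Matrix (Fin 2) (Fin 2) ℂ) i j ∈ Od d
    rw [Matrix.SpecialLinearGroup.coe_one, Matrix.one_apply]
    split
    · exact one_mem _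
    · exact zero_mem _
  mul_mem' := by
    intro a b ha hb i j
    show ((a * b : SL2C) : Matrix (Fin 2) (Fin 2) ℂ) i j ∈ Od d
    rw [Matrix.SpecialLinearGroup.coe_mul, Matrix.mul_apply]
    exact Subring.sum_mem _ fun k _ => mul_mem (ha i k) (hb k j)
  inv_mem' := by
    intro a ha i j
    show ((a⁻¹ : SL2C) : Matrix (Fin 2) (Fin 2) ℂ) i j ∈ Od d
    rw [Matrix.SpecialLinearGroup.coe_inv, Matrix.adjugate_fin_two]
    fin_cases i <;> fin_cases j <;> simp <;>
      first
        | exact ha 1 1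
        | exact neg_mem (ha 0 1)
        | exact neg_mem (ha 1 0)
        | exact ha 0 1
        | exact ha 1 0
        | exact ha 0 0

open Polynomial in
theorem eval_chebyshevC_add_inv {F : Type*} [Field F] (u : F) (hu : u ≠ 0) (n : ℕ) :
    aeval (u + u⁻¹) (Chebyshev.C ℤ n) = u ^ n + (u ^ n)⁻¹ := by
  induction n using Nat.twoStepInduction with
  | zero =>
    rw [Nat.cast_zero, Chebyshev.C_zero, map_ofNat, pow_zero, inv_one]; norm_num
  | one => simp [Chebyshev.C_one]
  | more n ih1 ih2 =>
    have h := Chebyshev.C_add_two ℤ (n : ℤ)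
    push_cast at ih2 ⊢
    rw [h, map_sub, map_mul, ih1, ih2, aeval_X]
    field_simp
    ring

open Polynomial in
/-- If an integer polynomial `F` vanishes at one root of a monic integer quadratic but not at the
other, then the first root is an integer: the remainder of `F` modulo the quadratic is linear, and
an irrational root can only kill a linear integer polynomial which is zero. A rational root is
an integer by integrality. -/
theorem eq_intCast_of_aeval {x y : ℝ} {s p : ℤ} (hs : x + y = s) (hp : x * y = p)
    (F : ℤ[X]) (hx : aeval x F = 0) (hy : aeval y F ≠ 0) : ∃ z : ℤ, x = z := by
  set q : ℤ[X] := X ^ 2 + (C (-s) * X + C p) with hq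
  have hdeg : (C (-s) * X + C p : ℤ[X]).degree < (2 : ℕ) :=
    lt_of_le_of_lt degree_linear_le (by norm_num)
  have hmon : q.Monic := monic_X_pow_add hdeg
  have hqd : q.degree = 2 := by
    rw [hq, degree_add_eq_left_of_degree_lt] <;> rw [degree_X_pow]
    · rfl
    · exact hdeg
  have hqx : aeval x q = 0 := by
    simp only [hq, map_add, map_mul, map_pow, map_neg, aeval_X, eq_intCast, map_intCast]
    rw [← hs, ← hp]; ring
  have hqy : aeval y q = 0 := by
    simp only [hq, map_add, map_mul, map_pow, map_neg, aeval_X, eq_intCast, map_intCast]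
    rw [← hs, ← hp]; ring
  have hint : IsIntegral ℤ x := ⟨q, hmon, by simpa [aeval_def] using hqx⟩
  rw [← IsIntegral.exists_int_iff_exists_rat hint]
  rw [← aeval_modByMonic_eq_self_of_root hqx] at hx
  rw [← aeval_modByMonic_eq_self_of_root hqy] at hy
  have hrd : (F %ₘ q).degree ≤ 1 := by
    have h := degree_modByMonic_lt F hmon
    rw [hqd] at h
    exact Order.le_of_lt_succ h
  rw [eq_X_add_C_of_degree_le_one hrd] at hx hy
  generalize (F %ₘ q).coeff 1 = α at hx hy
  generalize (F %ₘ q).coeff 0 = β at hx hy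
  simp only [map_add, map_mul, aeval_X, eq_intCast, map_intCast] at hx hy
  by_cases hα : α = 0
  · subst hα
    simp at hx hy
    exact absurd hx hy
  · have hα' : (α : ℝ) ≠ 0 := by exact_mod_cast hα
    refine ⟨-β / α, ?_⟩
    push_cast
    field_simp
    linarith

/-- For an integer `|j| ≤ 2`, the polynomial `X² - jX + 1` is `(X ± 1)²` or a cyclotomic
polynomial of order `3`, `4` or `6`, so its roots are twelfth roots of unity. -/
theorem pow_twelve_eq_one {F : Type*} [CommRing F] [IsReduced F] {u : F} {j : ℤ}
    (hj : j = -2 ∨ j = -1 ∨ j = 0 ∨ j = 1 ∨ j = 2) (h : u ^ 2 - j * u + 1 = 0) : u ^ 12 = 1 := by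
  rcases hj with rfl | rfl | rfl | rfl | rfl <;> push_cast at h
  · have h1 : (u + 1) ^ 2 = 0 := by linear_combination h
    have h2 : u = -1 := by linear_combination pow_eq_zero_iff (two_ne_zero) |>.1 h1
    rw [h2]; norm_num
  · have h1 : u ^ 3 = 1 := by linear_combination (u - 1) * h
    linear_combination (u ^ 9 + u ^ 6 + u ^ 3 + 1) * h1
  · have h1 : u ^ 2 = -1 := by linear_combination h
    rw [show u ^ 12 = (u ^ 2) ^ 6 by ring, h1]; norm_num
  · have h1 : u ^ 3 = -1 := by linear_combination (u + 1) * h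
    rw [show u ^ 12 = (u ^ 3) ^ 4 by ring, h1]; norm_num
  · have h1 : (u - 1) ^ 2 = 0 := by linear_combination h
    have h2 : u = 1 := by linear_combination pow_eq_zero_iff (two_ne_zero) |>.1 h1
    rw [h2]; norm_num

/-- The criterion for a single eigenvalue `l` with `l + l⁻¹ = a + b√(-d)`. -/
theorem exists_pow_real_iff (d : ℕ) (l : ℂ) (hl : l ≠ 0) (a b : ℤ)
    (htr : l + l⁻¹ = (a : ℂ) + (b : ℂ) * (Complex.I * (Real.sqrt d : ℂ))) :
    (∃ m : ℕ, 1 ≤ m ∧ (l ^ m).im = 0) ↔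
    (∃ k : ℤ, k ∈ ({0, 1, 2, 3, 4} : Set ℤ) ∧
      (4 - k) * a ^ 2 - k * (d : ℤ) * b ^ 2 = k * (4 - k)) := by
  obtain ⟨x, hx⟩ : ∃ x, x = l.re := ⟨_, rfl⟩
  obtain ⟨y, hy⟩ : ∃ y, y = l.im := ⟨_, rfl⟩
  obtain ⟨N, hN⟩ : ∃ N, N = x ^ 2 + y ^ 2 := ⟨_, rfl⟩
  have hNs : Complex.normSq l = N := by rw [Complex.normSq_apply, hN, hx, hy]; ring
  have hN0 : 0 < N := by rw [← hNs]; exact Complex.normSq_pos.2 hl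
  have hsq : Real.sqrt d ^ 2 = d := Real.sq_sqrt (by positivity)
  have ha : (a : ℝ) * N = x * (N + 1) := by
    have h := congrArg Complex.re htr
    simp [Complex.inv_re, hNs, ← hx] at h
    rw [← h]; field_simp
  have hb : (b : ℝ) * Real.sqrt d * N = y * (N - 1) := by
    have h := congrArg Complex.im htr
    simp [Complex.inv_im, hNs, ← hy] at h
    rw [← h]; field_simp; ring
  have hb2 : (d : ℝ) * b ^ 2 * N ^ 2 = y ^ 2 * (N - 1) ^ 2 := by
    rw [← hsq]; linear_combination (b * Real.sqrt d * N + y * (N - 1)) * hb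
  have ha2 : (a : ℝ) ^ 2 * N ^ 2 = x ^ 2 * (N + 1) ^ 2 := by
    linear_combination (a * N + x * (N + 1)) * ha
  -- `k₀` and `K` are the two roots in `k` of the Pell equation.
  obtain ⟨k₀, hk₀⟩ : ∃ k₀, k₀ = 4 * x ^ 2 / N := ⟨_, rfl⟩
  obtain ⟨K, hK⟩ : ∃ K, K = (N + 1) ^ 2 / N := ⟨_, rfl⟩
  have hsum : k₀ + K = 4 + a ^ 2 + d * b ^ 2 := by
    have e1 : (a : ℝ) ^ 2 = x ^ 2 * (N + 1) ^ 2 / N ^ 2 := by rw [← ha2]; field_simp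
    have e2 : (d : ℝ) * b ^ 2 = y ^ 2 * (N - 1) ^ 2 / N ^ 2 := by rw [← hb2]; field_simp
    rw [e1, e2, hk₀, hK]
    field_simp
    rw [show y ^ 2 = N - x ^ 2 by rw [hN]; ring]
    ring
  have hprod : k₀ * K = 4 * a ^ 2 := by
    have e1 : (a : ℝ) ^ 2 = x ^ 2 * (N + 1) ^ 2 / N ^ 2 := by rw [← ha2]; field_simp
    rw [e1, hk₀, hK]; field_simp
  have hquad (k : ℤ) : (4 - k) * a ^ 2 - k * (d : ℤ) * b ^ 2 = k * (4 - k) ↔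
      ((k : ℝ) - k₀) * (k - K) = 0 := by
    rw [← @Int.cast_inj ℝ]
    push_cast
    constructor <;> intro h
    · linear_combination h - k * hsum + hprod
    · linear_combination h + k * hsum - hprod
  have hk₀0 : 0 ≤ k₀ := by rw [hk₀]; positivity
  have hk₀4 : k₀ ≤ 4 := by rw [hk₀, div_le_iff₀ hN0, hN]; nlinarith [sq_nonneg y]
  -- `u = l / conj l` has `u + u⁻¹ = k₀ - 2`.
  obtain ⟨c, hc⟩ : ∃ c, c = (starRingEnd ℂ) l := ⟨_, rfl⟩
  have hc0 : c ≠ 0 := by rw [hc]; simpa using hl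
  have hlc : l * c = N := by rw [hc, Complex.mul_conj, hNs]
  have hlc2 : l + c = 2 * x := by rw [hc, Complex.add_conj, hx]; push_cast; ring
  have hNC : (N : ℂ) ≠ 0 := by exact_mod_cast hN0.ne'
  have hu0 : l / c ≠ 0 := div_ne_zero hl hc0
  have hu : l / c + (l / c)⁻¹ = ((k₀ - 2 : ℝ) : ℂ) := by
    have : ((k₀ - 2 : ℝ) : ℂ) = ((2 * x) ^ 2 - 2 * N) / N := by
      rw [hk₀]; push_cast; field_simp; ring
    rw [this, ← hlc2, ← hlc]
    field_simp
    ring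
  constructor
  · rintro ⟨m, hm, him⟩
    have hint : ∃ z : ℤ, k₀ = z := by
      by_cases hN1 : N = 1
      · refine ⟨a ^ 2, ?_⟩
        rw [hN1] at hK
        push_cast
        rw [hK] at hprod
        linarith
      · have hcm : l ^ m = c ^ m := by
          rw [hc, ← map_pow]; exact (Complex.conj_eq_iff_im.2 him).symm
        have hum : (l / c) ^ m = 1 := by
          rw [div_pow, hcm, div_self (pow_ne_zero _ hc0)]
        have hroot : Polynomial.aeval (k₀ - 2) (Polynomial.Chebyshev.C ℤ m - 2) = 0 := by
          have h := eval_chebyshevC_add_inv (l / c) hu0 m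
          rw [hu, hum] at h
          apply Complex.ofReal_injective
          have h2 := Polynomial.aeval_algebraMap_apply ℂ (k₀ - 2) (Polynomial.Chebyshev.C ℤ m)
          simp only [Complex.coe_algebraMap] at h2
          rw [h] at h2
          rw [map_sub, map_ofNat, Complex.ofReal_sub, ← h2]
          norm_num
        have hnroot : Polynomial.aeval (K - 2) (Polynomial.Chebyshev.C ℤ m - 2) ≠ 0 := by
          have h := eval_chebyshevC_add_inv N hN0.ne' m
          have hKN : K - 2 = N + N⁻¹ := by rw [hK]; field_simp; ring
          rw [map_sub, hKN, h, map_ofNat]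
          intro h0
          have hp : 0 < N ^ m := by positivity
          field_simp at h0
          have h1 : (N ^ m - 1) ^ 2 = 0 := by linear_combination h0
          have h2 : N ^ m = 1 := by linear_combination pow_eq_zero_iff (two_ne_zero) |>.1 h1
          exact hN1 ((pow_eq_one_iff_of_nonneg hN0.le (by omega)).1 h2)
        obtain ⟨z, hz⟩ := eq_intCast_of_aeval (x := k₀ - 2) (y := K - 2)
          (s := a ^ 2 + d * b ^ 2) (p := 4 * a ^ 2 - 2 * (4 + a ^ 2 + d * b ^ 2) + 4)
          (by push_cast; linear_combination hsum)
          (by push_cast; linear_combination hprod - 2 * hsum) _ hroot hnroot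
        exact ⟨z + 2, by push_cast; linarith⟩
    obtain ⟨z, hz⟩ := hint
    refine ⟨z, ?_, (hquad z).2 (by rw [hz]; ring)⟩
    have h0 : 0 ≤ z := by rw [hz] at hk₀0; exact_mod_cast hk₀0
    have h4 : z ≤ 4 := by rw [hz] at hk₀4; exact_mod_cast hk₀4
    simp only [Set.mem_insert_iff, Set.mem_singleton_iff]
    omega
  · rintro ⟨k, hk, h⟩
    refine ⟨12, by norm_num, ?_⟩
    simp only [Set.mem_insert_iff, Set.mem_singleton_iff] at hk
    rcases mul_eq_zero.1 ((hquad k).1 h) with h1 | h1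
    · have hkk : k₀ = k := by linarith
      have h12 : (l / c) ^ 12 = 1 := by
        refine pow_twelve_eq_one (j := k - 2) (by omega) ?_
        rw [hkk] at hu
        push_cast at hu ⊢
        rw [← hu]
        field_simp
        ring
      rw [div_pow, div_eq_one_iff_eq (pow_ne_zero _ hc0)] at h12
      rw [← Complex.conj_eq_iff_im, map_pow, ← hc, h12]
    -- `K = N + N⁻¹ + 2 ≥ 4`, so this root is only possible for `N = 1`, when `l` is a root of
    -- unity.
    · have hKk : K = k := by linarith
      have hK4 : (N - 1) ^ 2 = (K - 4) * N := by rw [hK]; field_simp; ring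
      have hk4 : (k : ℝ) ≤ 4 := by
        have : k ≤ 4 := by omega
        exact_mod_cast this
      have hN1 : N = 1 := by
        have : (N - 1) ^ 2 = 0 := by
          apply le_antisymm _ (sq_nonneg _)
          rw [hK4, hKk]; nlinarith
        linarith [pow_eq_zero_iff (two_ne_zero) |>.1 this]
      have ha' : (a : ℝ) = 2 * x := by rw [hN1] at ha; linarith
      have hx1 : x ^ 2 ≤ 1 := by nlinarith [sq_nonneg y]
      have ha4 : a ^ 2 ≤ 4 := by
        have : (a : ℝ) ^ 2 ≤ 4 := by rw [ha']; nlinarith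
        exact_mod_cast this
      have hal : -2 ≤ a := by nlinarith
      have hau : a ≤ 2 := by nlinarith
      have h12 : l ^ 12 = 1 := by
        refine pow_twelve_eq_one (j := a) (by omega) ?_
        have haC : (a : ℂ) = 2 * x := by exact_mod_cast congrArg Complex.ofReal ha'
        rw [hN1] at hlc
        push_cast at hlc
        rw [haC, ← hlc2, ← hlc]
        ring
      rw [h12]; simp

/-- Let `γ ∈ SL_2(ℤ[√(-d)])` be semisimple of infinite order with `tr(γ) = a + b√(-d)`.
Some power `γⁿ` (`n ≥ 1`) has both eigenvalues real iff the Pell equation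
`(4-k)a² - k d b² = k(4-k)` holds for some `k ∈ {0,1,2,3,4}`. -/
theorem statement_13 (d : ℕ) (hd : 0 < d) (hsf : Squarefree d)
    (γ : SL2C) (hγ : γ ∈ GammaO d)
    (hss : ∃ g : SL2C, (g * γ * g⁻¹).1 0 1 = 0 ∧ (g * γ * g⁻¹).1 1 0 = 0)
    (hio : ∀ m : ℕ, 1 ≤ m → γ ^ m ≠ 1)
    (a b : ℤ)
    (htr : γ.1 0 0 + γ.1 1 1 = (a : ℂ) + (b : ℂ) * (Complex.I * (Real.sqrt d : ℂ))) :
    (∃ m : ℕ, 1 ≤ m ∧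
      ∀ μ : ℂ, (((γ ^ m : SL2C) : Matrix (Fin 2) (Fin 2) ℂ) - μ • 1).det = 0 → μ.im = 0) ↔
    (∃ k : ℤ, k ∈ ({0, 1, 2, 3, 4} : Set ℤ) ∧
      (4 - k) * a ^ 2 - k * (d : ℤ) * b ^ 2 = k * (4 - k)) := by
  obtain ⟨g, h01, h10⟩ := hss
  -- The eigenvalues of `γ` are the diagonal entries `p, q` of its diagonal conjugate.
  obtain ⟨δ, hδ⟩ : ∃ δ, δ = g * γ * g⁻¹ := ⟨_, rfl⟩
  rw [← hδ] at h01 h10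
  obtain ⟨p, hp⟩ : ∃ p, p = δ.1 0 0 := ⟨_, rfl⟩
  obtain ⟨q, hq⟩ : ∃ q, q = δ.1 1 1 := ⟨_, rfl⟩
  have hD : δ.1 = Matrix.diagonal ![p, q] := by
    ext i j
    fin_cases i <;> fin_cases j <;> simp_all
  have hpq : p * q = 1 := by
    have h := δ.2
    rw [hD, Matrix.det_diagonal] at h
    simpa using h
  have hp0 : p ≠ 0 := left_ne_zero_of_mul_eq_one hpq
  have hqp : q = p⁻¹ := eq_inv_of_mul_eq_one_right hpq
  have hgg : g.1 * (g⁻¹).1 = 1 := by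
    rw [← Matrix.SpecialLinearGroup.coe_mul, mul_inv_cancel, Matrix.SpecialLinearGroup.coe_one]
  have hgg' : (g⁻¹).1 * g.1 = 1 := by
    rw [← Matrix.SpecialLinearGroup.coe_mul, inv_mul_cancel, Matrix.SpecialLinearGroup.coe_one]
  have htrace : γ.1 0 0 + γ.1 1 1 = p + p⁻¹ := by
    have h1 : δ.1.trace = γ.1.trace := by
      rw [hδ, Matrix.SpecialLinearGroup.coe_mul, Matrix.SpecialLinearGroup.coe_mul,
        Matrix.trace_mul_comm, ← mul_assoc, hgg', one_mul]
    rw [hD, Matrix.trace_diagonal, Matrix.trace_fin_two] at h1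
    simpa [hqp] using h1.symm
  have hdet (m : ℕ) (μ : ℂ) :
      (((γ ^ m : SL2C) : Matrix (Fin 2) (Fin 2) ℂ) - μ • 1).det = (p ^ m - μ) * (q ^ m - μ) := by
    have h1 : δ ^ m = g * γ ^ m * g⁻¹ := by rw [hδ, conj_pow]
    have h2 : Matrix.diagonal ![p ^ m - μ, q ^ m - μ]
        = g.1 * (((γ ^ m : SL2C) : Matrix (Fin 2) (Fin 2) ℂ) - μ • 1) * (g⁻¹).1 := by
      have h3 : (δ ^ m : SL2C).1 = g.1 * (γ ^ m : SL2C).1 * (g⁻¹).1 := by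
        rw [h1, Matrix.SpecialLinearGroup.coe_mul, Matrix.SpecialLinearGroup.coe_mul]
      rw [mul_sub, sub_mul, ← h3, Matrix.SpecialLinearGroup.coe_pow, hD, Matrix.diagonal_pow]
      rw [Matrix.mul_smul, mul_one, Matrix.smul_mul, hgg]
      ext i j
      fin_cases i <;> fin_cases j <;> simp
    have h4 := congrArg Matrix.det h2
    rw [Matrix.det_mul, Matrix.det_mul, g.2, (g⁻¹).2, Matrix.det_diagonal] at h4
    simpa using h4.symm
  rw [← exists_pow_real_iff d p hp0 a b (htrace ▸ htr)]
  refine exists_congr fun m => and_congr_right fun _ => ⟨fun h => ?_, fun h μ hμ => ?_⟩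
  · exact h _ (by rw [hdet]; ring)
  · rw [hdet] at hμ
    rcases mul_eq_zero.1 hμ with h1 | h1
    · rw [← sub_eq_zero.1 h1, h]
    · rw [← sub_eq_zero.1 h1, hqp, inv_pow, Complex.inv_im, h]; simp
end

section
/- Write tr(γ) = a + b√(−d) with a, b ∈ ℤ, and let λ ∈ ℂ be an eigenvalue of γ viewed as a matrix in SL_2(ℂ). Then the field ℚ(λ) (the subfield of ℂ generated by λ over ℚ) is a Galois extension of ℚ if and only if there exists k ∈ {0,1,2,3,4} such that (4−k)·a² − k·d·b² = k·(4−k). -/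
/-!
Put `s = i√d`, `t = tr γ = a + b s` and `δ = t² - 4`, the discriminant of the characteristic
polynomial `X² - t X + 1`. Its root `λ` is `(t + w) / 2` with `w = 2λ - t`, `w² = δ`. The four
roots of the rational quartic `(X² - t X + 1)(X² - t̄ X + 1)` are `λ`, `t - λ` and their complex
conjugates, and two facts link the Galois condition to the Pell equations.

* `ℚ(λ)/ℚ` is Galois iff `δ δ̄ = (a² + d b² + 4)² - 16 a²` is the square of an integer.
  If it is, then `w w̄` is an integer, so `w̄ ∈ ℚ(w)`, hence `λ̄ ∈ ℚ(λ)` and the quartic splits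
  in `ℚ(λ)` (`isGalois_of_conj_mem`). Conversely, if `ℚ(λ)` is Galois then `w̄ ∈ ℚ(λ) ⊆ K + K w`
  with `K = ℚ(s)`. Since `w²` and `w̄²` lie in `K`, either `w ∈ K` or `w̄ ∈ K w`; both give
  `w w̄ ∈ K`, and a real element of `K` is rational (`normSq_rational`).

* The Pell equation for `k` reads `k² - (a² + d b² + 4) k + 4 a² = 0`, a monic quadratic in `k`
  of discriminant `δ δ̄`. It takes the value `4 a² ≥ 0` at `k = 0` and `-4 d b² ≤ 0` at `k = 4`,
  so its smaller root lies in `[0, 4]`, and it has an integral root exactly when `δ δ̄` is a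
  square (`pell_iff_isSquare`).
-/

open Matrix Pointwise

section

open Polynomial ComplexConjugate

/-- The field `ℚ(s)` for `s² = -d`, described by its elements `x + y s`, which makes its stability
under complex conjugation and its real elements visible. -/
def quadField (d : ℕ) (hd : 0 < d) (s : ℂ) (hs : s ^ 2 = -d) : Subfield ℂ where
  carrier := {z | ∃ x y : ℚ, z = x + y * s}
  mul_mem' := by
    rintro _ _ ⟨x, y, rfl⟩ ⟨u, v, rfl⟩
    refine ⟨x * u - d * (y * v), x * v + y * u, ?_⟩
    push_cast
    linear_combination (y * v : ℂ) * hs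
  one_mem' := ⟨1, 0, by simp⟩
  add_mem' := by
    rintro _ _ ⟨x, y, rfl⟩ ⟨u, v, rfl⟩
    exact ⟨x + u, y + v, by push_cast; ring⟩
  zero_mem' := ⟨0, 0, by simp⟩
  neg_mem' := by
    rintro _ ⟨x, y, rfl⟩
    exact ⟨-x, -y, by push_cast; ring⟩
  inv_mem' := by
    rintro _ ⟨x, y, rfl⟩
    by_cases h : x ^ 2 + d * y ^ 2 = 0
    · have hd' : (0 : ℚ) < d := by exact_mod_cast hd
      have hx : x = 0 := by nlinarith [sq_nonneg x, mul_nonneg hd'.le (sq_nonneg y)]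
      have hy : y = 0 := by
        subst hx
        simpa [hd.ne'] using h
      exact ⟨0, 0, by simp [hx, hy]⟩
    · refine ⟨x / (x ^ 2 + d * y ^ 2), -y / (x ^ 2 + d * y ^ 2), ?_⟩
      have h' : (x ^ 2 + d * y ^ 2 : ℂ) ≠ 0 := by exact_mod_cast h
      apply inv_eq_of_mul_eq_one_right
      push_cast
      rw [neg_div, neg_mul]
      have : (x + y * s : ℂ) * (x - y * s) = x ^ 2 + d * y ^ 2 := by
        linear_combination (-y ^ 2 : ℂ) * hs
      rw [← sub_eq_add_neg, div_mul_eq_mul_div, ← sub_div, mul_div_assoc', this, div_self h']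

theorem rational_of_real (d : ℕ) (hd : 0 < d) (z : ℂ)
    (hs : (Complex.I * (Real.sqrt d : ℂ)) ^ 2 = -d)
    (hz : z ∈ quadField d hd _ hs) (hr : z.im = 0) : ∃ q : ℚ, z = q := by
  obtain ⟨x, y, rfl⟩ := hz
  have hd' : Real.sqrt d ≠ 0 := by
    rw [Real.sqrt_ne_zero'] ; exact_mod_cast hd
  have hy : y = 0 := by
    simpa [hd', hd.ne'] using hr
  exact ⟨x, by simp [hy]⟩

/-- If `w² ∈ K` and `w̄ ∈ K + K w`, for `K` a conjugation-stable subfield, then `w w̄ ∈ K`. -/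
theorem mul_conj_mem (K : Subfield ℂ) (hK : ∀ z ∈ K, conj z ∈ K) (w : ℂ) (hw : w ^ 2 ∈ K)
    (h : ∃ x ∈ K, ∃ y ∈ K, conj w = x + y * w) : w * conj w ∈ K := by
  by_cases hwK : w ∈ K
  · exact mul_mem hwK (hK _ hwK)
  obtain ⟨x, hx, y, hy, e⟩ := h
  have hcw : conj w ^ 2 ∈ K := by
    rw [← map_pow]
    exact hK _ hw
  have h2 : (2 : ℂ) ∈ K := ofNat_mem K 2
  by_cases hx0 : x = 0
  · rw [e, hx0, show w * (0 + y * w) = y * w ^ 2 by ring]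
    exact mul_mem hy hw
  by_cases hy0 : y = 0
  · refine absurd ?_ hwK
    have := hK _ hx
    rwa [show x = conj w by simp [e, hy0], Complex.conj_conj] at this
  refine absurd ?_ hwK
  -- squaring `w̄ = x + y w` isolates `2 x y w`
  have : w = (conj w ^ 2 - x ^ 2 - y ^ 2 * w ^ 2) / (2 * x * y) := by
    rw [e]
    field_simp
    ring
  rw [this]
  exact div_mem (sub_mem (sub_mem hcw (pow_mem hx 2)) (mul_mem (pow_mem hy 2) hw))
    (mul_mem (mul_mem h2 hx) hy)

/-- The quartic `(X² - t X + 1)(X² - t̄ X + 1)`, where `t + t̄ = 2a` and `t t̄ = N`. -/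
noncomputable def quartic (a N : ℤ) : ℚ[X] :=
  X ^ 4 - C (2 * a : ℚ) * X ^ 3 + C (N + 2 : ℚ) * X ^ 2 - C (2 * a : ℚ) * X + 1

theorem quartic_ne_zero (a N : ℤ) : quartic a N ≠ 0 := by
  intro h
  have := congrArg (Polynomial.eval 0) h
  simp [quartic] at this

theorem map_quartic (a N : ℤ) (t l t' l' : ℂ) (hl : l ^ 2 - t * l + 1 = 0)
    (hl' : l' ^ 2 - t' * l' + 1 = 0) (h1 : t + t' = 2 * a) (h2 : t * t' = N) :
    (quartic a N).map (algebraMap ℚ ℂ) =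
      (X - C l) * (X - C (t - l)) * ((X - C l') * (X - C (t' - l'))) := by
  have e : ∀ t l : ℂ, l ^ 2 - t * l + 1 = 0 →
      (X - C l) * (X - C (t - l)) = X ^ 2 - C t * X + 1 := by
    intro t l h
    have : C l * C (t - l) = (1 : ℂ[X]) := by
      rw [← C_mul, ← C_1]
      congr 1
      linear_combination -h
    rw [C_sub] at this ⊢
    linear_combination this
  rw [e t l hl, e t' l' hl']
  have h1' : C t + C t' = (2 * C (a : ℂ) : ℂ[X]) := by
    rw [← C_add, h1, C_mul, C_ofNat]
  have h2' : C t * C t' = C (N : ℂ) := by rw [← C_mul, h2]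
  simp only [quartic, Polynomial.map_add, Polynomial.map_sub, Polynomial.map_mul,
    Polynomial.map_pow, map_X, map_C, Polynomial.map_one]
  simp only [map_add, map_mul, map_intCast, map_ofNat] at h1' h2' ⊢
  linear_combination (X ^ 3 + X) * h1' - X ^ 2 * h2'

theorem isGalois_adjoin_simple_of_roots {F E : Type*} [Field F] [CharZero F] [Field E] [Algebra F E]
    (p : F[X]) (l : E) (hsplits : (p.map (algebraMap F E)).Splits) (hl : l ∈ p.rootSet E)
    (hroot : ∀ z ∈ p.rootSet E, z ∈ IntermediateField.adjoin F {l}) :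
    IsGalois F (IntermediateField.adjoin F {l}) := by
  have : p.IsSplittingField F (IntermediateField.adjoin F {l}) := by
    rw [IntermediateField.isSplittingField_iff]
    refine ⟨IntermediateField.splits_of_splits hsplits hroot, le_antisymm ?_ ?_⟩
    · rw [IntermediateField.adjoin_simple_le_iff]
      exact IntermediateField.subset_adjoin _ _ hl
    · exact IntermediateField.adjoin_le_iff.mpr hroot
  have : Normal F (IntermediateField.adjoin F {l}) := Normal.of_isSplittingField p
  exact { }

theorem mem_adjoin_simple_of_normal {F E : Type*} [Field F] [Field E] [Algebra F E] (l m : E)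
    [hn : Normal F (IntermediateField.adjoin F {l})] (hm : aeval m (minpoly F l) = 0) :
    m ∈ IntermediateField.adjoin F {l} := by
  have hsp := hn.splits (IntermediateField.AdjoinSimple.gen F l)
  rw [IntermediateField.minpoly_gen] at hsp
  have hint : IsIntegral F l := by
    simpa using (hn.isIntegral (IntermediateField.AdjoinSimple.gen F l)).algebraMap (B := E)
  obtain ⟨z, hz⟩ := hsp.mem_range_of_isRoot (x := m)
    (Polynomial.map_ne_zero (minpoly.ne_zero hint))
    (i := algebraMap (IntermediateField.adjoin F {l}) E)
    (by
      rw [Polynomial.map_map, ← IsScalarTower.algebraMap_eq, Polynomial.IsRoot, Polynomial.eval_map,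
        ← Polynomial.aeval_def]
      exact hm)
  rw [← hz]
  exact z.2

/-- If the conjugate root lies in `ℚ(λ)`, then all four roots of the quartic do. -/
theorem isGalois_of_conj_mem (a N : ℤ) (t l : ℂ) (hl : l ^ 2 - t * l + 1 = 0)
    (h1 : t + conj t = 2 * a) (h2 : t * conj t = N)
    (ht : t ∈ IntermediateField.adjoin ℚ {l}) (hc : conj l ∈ IntermediateField.adjoin ℚ {l}) :
    IsGalois ℚ (IntermediateField.adjoin ℚ {l}) := by
  have hl' : (conj l) ^ 2 - conj t * conj l + 1 = 0 := by
    simpa using congrArg conj hl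
  have hmap := map_quartic a N t l (conj t) (conj l) hl hl' h1 h2
  have hlm : l ∈ IntermediateField.adjoin ℚ {l} := IntermediateField.mem_adjoin_simple_self ℚ l
  have ht' : conj t ∈ IntermediateField.adjoin ℚ {l} := by
    rw [show conj t = 2 * a - t by linear_combination h1]
    exact sub_mem (mul_mem (ofNat_mem _ 2) (intCast_mem _ a)) ht
  have hroot : ∀ z ∈ (quartic a N).rootSet ℂ, z ∈ IntermediateField.adjoin ℚ {l} := by
    intro z hz
    have hz0 := Polynomial.aeval_eq_zero_of_mem_rootSet hz
    rw [Polynomial.aeval_def, ← Polynomial.eval_map, hmap] at hz0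
    simp only [eval_mul, eval_sub, eval_X, eval_C, mul_eq_zero, sub_eq_zero] at hz0
    rcases hz0 with (rfl | rfl) | (rfl | rfl)
    · exact hlm
    · exact sub_mem ht hlm
    · exact hc
    · exact sub_mem ht' hc
  have hlroot : l ∈ (quartic a N).rootSet ℂ := by
    rw [Polynomial.mem_rootSet, Polynomial.aeval_def, ← Polynomial.eval_map, hmap]
    exact ⟨quartic_ne_zero a N, by simp⟩
  -- the two `ℚ`-algebra structures on `ℚ(λ)` are propositionally equal
  convert isGalois_adjoin_simple_of_roots (quartic a N) l (IsAlgClosed.splits _) hlroot hroot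
  exact Subsingleton.elim _ _

theorem isIntegral_and_conj_mem_of_isGalois (l : ℂ)
    (hG : IsGalois ℚ (IntermediateField.adjoin ℚ {l})) :
    IsIntegral ℚ l ∧ conj l ∈ IntermediateField.adjoin ℚ {l} := by
  -- passage to the `ℚ`-algebra structure of `ℚ(λ)` as an intermediate field
  have hn : @Normal ℚ (IntermediateField.adjoin ℚ {l}) _ _
      (IntermediateField.algebra' (IntermediateField.adjoin ℚ {l})) := by
    convert hG.to_normal
    exact Subsingleton.elim _ _
  refine ⟨?_, mem_adjoin_simple_of_normal l (conj l) ?_⟩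
  · simpa using (hn.isIntegral (IntermediateField.AdjoinSimple.gen ℚ l)).algebraMap (B := ℂ)
  · have h := congrArg conj (minpoly.aeval ℚ l)
    rw [map_zero] at h
    rw [← h]
    exact Polynomial.aeval_algHom_apply (Complex.conjAe.toAlgHom.restrictScalars ℚ) l _

/-- The Pell equation for `k` is the monic quadratic `k² - (a² + d b² + 4) k + 4 a² = 0`, of the
displayed discriminant; its smaller real root lies in `[0, 4]`. -/
theorem pell_iff_isSquare (d : ℕ) (a b : ℤ) :
    (∃ k : ℤ, k ∈ ({0, 1, 2, 3, 4} : Set ℤ) ∧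
      (4 - k) * a ^ 2 - k * (d : ℤ) * b ^ 2 = k * (4 - k)) ↔
    IsSquare ((a ^ 2 + d * b ^ 2 + 4) ^ 2 - 16 * a ^ 2) := by
  have hB : 0 ≤ (d : ℤ) * b ^ 2 := by positivity
  have hA : 0 ≤ a ^ 2 := by positivity
  constructor
  · rintro ⟨k, -, h⟩
    refine ⟨a ^ 2 + d * b ^ 2 + 4 - 2 * k, ?_⟩
    linear_combination (-4) * h
  · rintro ⟨n', hn'⟩
    obtain ⟨n, hn0, hn⟩ : ∃ n : ℤ, 0 ≤ n ∧ (a ^ 2 + d * b ^ 2 + 4) ^ 2 - 16 * a ^ 2 = n ^ 2 :=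
      ⟨|n'|, abs_nonneg _, by rw [sq_abs, hn', sq]⟩
    obtain ⟨B, hBd⟩ : ∃ B : ℤ, B = d * b ^ 2 := ⟨_, rfl⟩
    rw [← hBd] at hn hB
    -- `n² ≡ (a² + B)²` modulo `2`, so the roots `(a² + B + 4 ± n) / 2` are integers
    have hpar : Even (a ^ 2 + B + 4 - n) := by
      have : Even ((a ^ 2 + B + 4) ^ 2 - n ^ 2) := ⟨8 * a ^ 2, by linear_combination hn⟩
      rw [Int.even_sub, Int.even_pow' two_ne_zero, Int.even_pow' two_ne_zero] at this
      exact Int.even_sub.mpr this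
    obtain ⟨k, hk⟩ := hpar
    have hk0 : 0 ≤ k := by
      have : n ≤ a ^ 2 + B + 4 := abs_le_of_sq_le_sq' (by linarith) (by positivity) |>.2
      linarith
    have hk4 : k ≤ 4 := by
      have : a ^ 2 + B - 4 ≤ n := abs_le_of_sq_le_sq' (by nlinarith) hn0 |>.2
      linarith
    refine ⟨k, ?_, ?_⟩
    · simp only [Set.mem_insert_iff, Set.mem_singleton_iff]
      omega
    · have hnk : n = a ^ 2 + B + 4 - 2 * k := by linarith
      rw [hnk] at hn
      rw [mul_assoc, ← hBd]
      linarith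

/-- If `λ̄ ∈ ℚ(λ)`, then `w w̄` is rational, where `w = 2λ - t`. -/
theorem normSq_rational (d : ℕ) (hd : 0 < d) (s t l : ℂ) (hsd : s = Complex.I * (Real.sqrt d : ℂ))
    (hs : s ^ 2 = -d) (ht : t ∈ quadField d hd s hs) (hl : l ^ 2 - t * l + 1 = 0)
    (hint : IsIntegral ℚ l) (hc : conj l ∈ IntermediateField.adjoin ℚ {l}) :
    ∃ q : ℚ, (2 * l - t) * conj (2 * l - t) = q := by
  set K := quadField d hd s hs with hKdef
  have hK : ∀ z ∈ K, conj z ∈ K := by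
    rintro _ ⟨x, y, rfl⟩
    refine ⟨x, -y, ?_⟩
    simp [hsd]
  have h2 : (2 : ℂ) ∈ K := ofNat_mem K 2
  have hw : (2 * l - t) ^ 2 ∈ K := by
    rw [show (2 * l - t) ^ 2 = t ^ 2 - 2 * 2 by linear_combination 4 * hl]
    exact sub_mem (pow_mem ht 2) (mul_mem h2 h2)
  have hmem : ∀ z ∈ Algebra.adjoin ℚ {l}, ∃ x ∈ K, ∃ y ∈ K, z = x + y * (2 * l - t) := by
    intro z hz
    induction hz using Algebra.adjoin_induction with
    | mem z hz =>
      rw [Set.mem_singleton_iff] at hz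
      exact ⟨t / 2, div_mem ht h2, 2⁻¹, inv_mem h2, by rw [hz]; ring⟩
    | algebraMap r => exact ⟨r, SubfieldClass.ratCast_mem K r, 0, zero_mem K, by simp⟩
    | add z z' _ _ h h' =>
      obtain ⟨x, hx, y, hy, rfl⟩ := h
      obtain ⟨x', hx', y', hy', rfl⟩ := h'
      exact ⟨x + x', add_mem hx hx', y + y', add_mem hy hy', by ring⟩
    | mul z z' _ _ h h' =>
      obtain ⟨x, hx, y, hy, rfl⟩ := h
      obtain ⟨x', hx', y', hy', rfl⟩ := h'
      exact ⟨x * x' + y * y' * (2 * l - t) ^ 2,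
        add_mem (mul_mem hx hx') (mul_mem (mul_mem hy hy') hw), x * y' + y * x',
        add_mem (mul_mem hx hy') (mul_mem hy hx'), by ring⟩
  rw [← IntermediateField.mem_toSubalgebra,
    IntermediateField.adjoin_simple_toSubalgebra_of_isAlgebraic hint.isAlgebraic] at hc
  obtain ⟨x, hx, y, hy, e⟩ := hmem _ hc
  have hwc : ∃ x ∈ K, ∃ y ∈ K, conj (2 * l - t) = x + y * (2 * l - t) :=
    ⟨2 * x - conj t, sub_mem (mul_mem h2 hx) (hK _ ht), 2 * y, mul_mem h2 hy, by
      rw [map_sub, map_mul, e, map_ofNat]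
      ring⟩
  have hr := mul_conj_mem K hK _ hw hwc
  subst hsd
  exact rational_of_real d hd _ hs hr (by rw [Complex.mul_conj, Complex.ofReal_im])

theorem isGalois_iff_isSquare (d : ℕ) (hd : 0 < d) (a b : ℤ) (t l : ℂ)
    (ht : t = (a : ℂ) + (b : ℂ) * (Complex.I * (Real.sqrt d : ℂ)))
    (hl : l ^ 2 - t * l + 1 = 0) :
    IsGalois ℚ (IntermediateField.adjoin ℚ ({l} : Set ℂ)) ↔
    IsSquare ((a ^ 2 + d * b ^ 2 + 4) ^ 2 - 16 * a ^ 2 : ℤ) := by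
  have hs : (Complex.I * (Real.sqrt d : ℂ)) ^ 2 = -d := by
    rw [mul_pow, Complex.I_sq, ← Complex.ofReal_pow, Real.sq_sqrt (Nat.cast_nonneg d)]
    simp
  have hct : conj t = a - b * (Complex.I * (Real.sqrt d : ℂ)) := by
    rw [ht]
    simp [sub_eq_add_neg]
  have h1 : t + conj t = 2 * a := by
    rw [hct, ht]
    ring
  have h2 : t * conj t = ((a ^ 2 + d * b ^ 2 : ℤ) : ℂ) := by
    rw [hct, ht]
    push_cast
    linear_combination (-b ^ 2 : ℂ) * hs
  have hl' : (conj l) ^ 2 - conj t * conj l + 1 = 0 := by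
    simpa using congrArg conj hl
  have hcw : conj (2 * l - t) = 2 * conj l - conj t := by
    rw [map_sub, map_mul, map_ofNat]
  have hdisc : ((2 * l - t) * conj (2 * l - t)) ^ 2
      = (((a ^ 2 + d * b ^ 2 + 4) ^ 2 - 16 * a ^ 2 : ℤ) : ℂ) := by
    have e1 : (2 * l - t) ^ 2 = t ^ 2 - 4 := by linear_combination 4 * hl
    have e2 : (2 * conj l - conj t) ^ 2 = conj t ^ 2 - 4 := by linear_combination 4 * hl'
    rw [hcw, mul_pow, e1, e2]
    push_cast at h2 ⊢
    linear_combination (t * conj t + a ^ 2 + d * b ^ 2 + 8) * h2 - 4 * (t + conj t + 2 * a) * h1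
  constructor
  · intro hG
    obtain ⟨hint, hc⟩ := isIntegral_and_conj_mem_of_isGalois l hG
    obtain ⟨q, hq⟩ := normSq_rational d hd _ t l rfl hs ⟨a, b, by rw [ht]; simp⟩ hl hint hc
    rw [← Rat.isSquare_intCast_iff]
    refine ⟨q, ?_⟩
    rw [hq] at hdisc
    rw [← sq]
    exact_mod_cast hdisc.symm
  · rintro ⟨n, hn⟩
    have hlm : l ∈ IntermediateField.adjoin ℚ {l} := IntermediateField.mem_adjoin_simple_self ℚ l
    have hl0 : l ≠ 0 := by
      rintro rfl
      simp at hl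
    have htm : t ∈ IntermediateField.adjoin ℚ {l} := by
      rw [show t = l + l⁻¹ by field_simp; linear_combination -hl]
      exact add_mem hlm (inv_mem hlm)
    have htm' : conj t ∈ IntermediateField.adjoin ℚ {l} := by
      rw [show conj t = 2 * a - t by linear_combination h1]
      exact sub_mem (mul_mem (ofNat_mem _ 2) (intCast_mem _ a)) htm
    have hwm : 2 * l - t ∈ IntermediateField.adjoin ℚ {l} :=
      sub_mem (mul_mem (ofNat_mem _ 2) hlm) htm
    have hwm' : conj (2 * l - t) ∈ IntermediateField.adjoin ℚ {l} := by
      by_cases hw0 : 2 * l - t = 0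
      · rw [hw0, map_zero]
        exact zero_mem _
      · obtain ⟨m, hm⟩ : ∃ m : ℤ, (2 * l - t) * conj (2 * l - t) = m := by
          rw [hn, Int.cast_mul, ← sq] at hdisc
          rcases sq_eq_sq_iff_eq_or_eq_neg.mp hdisc with h | h
          · exact ⟨n, h⟩
          · exact ⟨-n, by rw [h]; simp⟩
        rw [show conj (2 * l - t) = m / (2 * l - t) by rw [← hm]; field_simp]
        exact div_mem (intCast_mem _ m) hwm
    refine isGalois_of_conj_mem a _ t l hl h1 h2 htm ?_
    rw [show conj l = (conj (2 * l - t) + conj t) / 2 by rw [hcw]; ring]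
    exact div_mem (add_mem hwm' htm') (ofNat_mem _ 2)

end

/-- Let `γ ∈ SL_2(ℤ[√(-d)])` be semisimple of infinite order with `tr(γ) = a + b√(-d)`,
and let `λ` be an eigenvalue of `γ`. Then `ℚ(λ)/ℚ` is Galois iff the Pell equation
`(4-k)a² - k d b² = k(4-k)` holds for some `k ∈ {0,1,2,3,4}`. -/
theorem statement_14 (d : ℕ) (hd : 0 < d) (hsf : Squarefree d)
    (γ : SL2C) (hγ : γ ∈ GammaO d)
    (hss : ∃ g : SL2C, (g * γ * g⁻¹).1 0 1 = 0 ∧ (g * γ * g⁻¹).1 1 0 = 0)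
    (hio : ∀ m : ℕ, 1 ≤ m → γ ^ m ≠ 1)
    (a b : ℤ)
    (htr : γ.1 0 0 + γ.1 1 1 = (a : ℂ) + (b : ℂ) * (Complex.I * (Real.sqrt d : ℂ)))
    (lam : ℂ) (hlam : ((γ : Matrix (Fin 2) (Fin 2) ℂ) - lam • 1).det = 0) :
    IsGalois ℚ (IntermediateField.adjoin ℚ ({lam} : Set ℂ)) ↔
    (∃ k : ℤ, k ∈ ({0, 1, 2, 3, 4} : Set ℤ) ∧
      (4 - k) * a ^ 2 - k * (d : ℤ) * b ^ 2 = k * (4 - k)) := by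
  have hdet := γ.2
  rw [Matrix.det_fin_two] at hdet
  have hl : lam ^ 2 - (γ.1 0 0 + γ.1 1 1) * lam + 1 = 0 := by
    rw [Matrix.det_fin_two] at hlam
    simp at hlam
    linear_combination hlam - hdet
  rw [isGalois_iff_isSquare d hd a b _ lam htr hl, pell_iff_isSquare]
end

section
/- Let g ∈ SL_2(ℂ) be such that gγg⁻¹ ∈ C, so that the orbit C·π(g) ⊆ X is compact. Then the A-action on C·π(g) is not minimal (i.e., some A-orbit in C·π(g) is not dense in C·π(g)) if and only if there exists an integer n ≥ 1 such that both eigenvalues of γⁿ (viewed in SL_2(ℂ)) are real. -/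
/-!
Write `x = π(g)` and `gγg⁻¹ = diag(λ, λ⁻¹)` with `λ = e^s κ`, `|κ| = 1`. Every power of
`diag(λ, λ⁻¹)` fixes `x`, and the eigenvalues of `γ^m` are `λ^m` and `λ^{-m}`
(`det_sub_smul`), so some `γ^m` has real eigenvalues iff `κ` is a root of unity.

If `κ` is not a root of unity, its powers are dense in the circle (`denseRange_zpow_circle`). As
`κ^n` differs from `λ^n` by a positive real factor, the points of `C·x` obtained by rotating by
`κ^n` lie on a single `A`-orbit, and all `A`-orbits in `C·x` are dense (`subset_closure_orbit`).

If `κ^m` is real then `κ^{2m} = 1`, so `λ^{2m}` is the positive real `e^{2ms}`; it is not `1`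
because `γ` has infinite order. Hence `A·x` is a closed loop, equal to `K·x` for a compact
interval `K` in `A`; it is closed in `X` because its preimage `K·gΓ` in `G` is a product of a compact
and a closed set (`closure_orbit_subset`, `isClosed_GammaO`). If `C·x` were contained in it, each
point of the circle would be the angle of an element of `C ∩ gΓg⁻¹`, contradicting the
countability of `Γ` (`not_subset_closure_orbit`).
-/

open Matrix Pointwise

/-- `C`: the set of diagonal matrices in `SL_2(ℂ)`. -/
def Cdiag : Set SL2C := {g | g.1 0 1 = 0 ∧ g.1 1 0 = 0}

/-- `A`: the set of diagonal matrices in `SL_2(ℂ)` with positive real diagonal entries. -/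
def Apos : Set SL2C := {g | g.1 0 1 = 0 ∧ g.1 1 0 = 0 ∧
  (g.1 0 0).im = 0 ∧ 0 < (g.1 0 0).re ∧ (g.1 1 1).im = 0 ∧ 0 < (g.1 1 1).re}

/-! ### Diagonal matrices and polar coordinates -/

instance : IsTopologicalGroup SL2C :=
  Matrix.SpecialLinearGroup.topologicalGroup

/-- The isomorphism `ℂˣ → C`, `z ↦ diag(z, z⁻¹)`, as a homomorphism into `SL_2(ℂ)`. -/
noncomputable def diagHom : ℂˣ →* SL2C where
  toFun z := ⟨!![(z : ℂ), 0; 0, ((z⁻¹ : ℂˣ) : ℂ)], by simp [Matrix.det_fin_two]⟩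
  map_one' := by ext i j; fin_cases i <;> fin_cases j <;> simp
  map_mul' a b := by
    refine Subtype.ext ?_
    show (!![_, _; _, _] : Matrix (Fin 2) (Fin 2) ℂ) = !![_, _; _, _] * !![_, _; _, _]
    ext i j
    fin_cases i <;> fin_cases j <;> simp [mul_comm]

/-- The positive real unit `exp s` of `ℂ`, so that `A = {diagHom (posUnit s) : s ∈ ℝ}`. -/
noncomputable def posUnit (s : ℝ) : ℂˣ := Units.mk0 (Real.exp s : ℂ) (by
  exact_mod_cast (Real.exp_pos s).ne')

lemma coe_diagHom (z : ℂˣ) :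
    (diagHom z).1 = !![(z : ℂ), 0; 0, ((z⁻¹ : ℂˣ) : ℂ)] := rfl

lemma diagHom_injective : Function.Injective diagHom := by
  intro a b h
  have := congrArg (fun M : SL2C => M.1 0 0) h
  ext
  simpa [coe_diagHom] using this

lemma continuous_diagHom : Continuous diagHom := by
  refine Continuous.subtype_mk (continuous_matrix fun i j => ?_) _
  have h1 : Continuous fun z : ℂˣ => (z : ℂ) := Units.continuous_val
  have h2 : Continuous fun z : ℂˣ => ((z⁻¹ : ℂˣ) : ℂ) := Units.continuous_val.comp continuous_inv
  fin_cases i <;> fin_cases j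
  · exact h1
  · exact continuous_const
  · exact continuous_const
  · exact h2

lemma coe_posUnit (s : ℝ) : (posUnit s : ℂ) = Real.exp s := rfl

lemma posUnit_add (s t : ℝ) : posUnit (s + t) = posUnit s * posUnit t := by
  ext
  simp only [coe_posUnit, Units.val_mul, Real.exp_add, Complex.ofReal_mul]

lemma posUnit_neg (s : ℝ) : posUnit (-s) = (posUnit s)⁻¹ := by
  rw [eq_inv_iff_mul_eq_one, ← posUnit_add]
  ext
  simp [coe_posUnit]

lemma posUnit_zsmul (n : ℤ) (s : ℝ) : posUnit (n • s) = posUnit s ^ n := by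
  ext
  rw [coe_posUnit, Units.val_zpow_eq_zpow_val, coe_posUnit, zsmul_eq_mul, mul_comm,
    Real.exp_mul, Real.rpow_intCast, Complex.ofReal_zpow]

lemma continuous_posUnit : Continuous posUnit := by
  rw [Units.continuous_iff]
  constructor
  · exact Complex.continuous_ofReal.comp Real.continuous_exp
  · have : (fun s => (((posUnit s)⁻¹ : ℂˣ) : ℂ)) = fun s => ((Real.exp (-s) : ℝ) : ℂ) := by
      funext s
      rw [← posUnit_neg, coe_posUnit]
    rw [this]
    exact Complex.continuous_ofReal.comp (Real.continuous_exp.comp continuous_neg)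

lemma mem_Cdiag_iff (c : SL2C) : c ∈ Cdiag ↔ ∃ z, diagHom z = c := by
  constructor
  · rintro ⟨h1, h2⟩
    have hdet := c.2
    rw [Matrix.det_fin_two, h1, h2, mul_zero, sub_zero] at hdet
    refine ⟨⟨c.1 0 0, c.1 1 1, hdet, by rw [mul_comm]; exact hdet⟩, ?_⟩
    ext i j
    fin_cases i <;> fin_cases j
    · rfl
    · exact h1.symm
    · exact h2.symm
    · rfl
  · rintro ⟨z, rfl⟩
    exact ⟨rfl, rfl⟩

lemma mem_Apos_iff (c : SL2C) : c ∈ Apos ↔ ∃ s, diagHom (posUnit s) = c := by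
  constructor
  · rintro ⟨h1, h2, h3, h4, -, -⟩
    obtain ⟨z, rfl⟩ := (mem_Cdiag_iff c).1 ⟨h1, h2⟩
    refine ⟨Real.log (z : ℂ).re, ?_⟩
    congr 1
    have h3' : (z : ℂ).im = 0 := h3
    have h4' : 0 < (z : ℂ).re := h4
    ext
    rw [coe_posUnit, Real.exp_log h4']
    exact Complex.ext (by simp) (by simp [h3'])
  · rintro ⟨s, rfl⟩
    have h : (((posUnit s)⁻¹ : ℂˣ) : ℂ) = ((Real.exp (-s) : ℝ) : ℂ) := by
      rw [← posUnit_neg, coe_posUnit]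
    refine ⟨rfl, rfl, ?_, ?_, ?_, ?_⟩
    · show (posUnit s : ℂ).im = 0
      rw [coe_posUnit, Complex.ofReal_im]
    · show 0 < (posUnit s : ℂ).re
      rw [coe_posUnit, Complex.ofReal_re]; exact Real.exp_pos s
    · show (((posUnit s)⁻¹ : ℂˣ) : ℂ).im = 0
      rw [h, Complex.ofReal_im]
    · show 0 < (((posUnit s)⁻¹ : ℂˣ) : ℂ).re
      rw [h, Complex.ofReal_re]; exact Real.exp_pos _

/-- Polar coordinates on `ℂˣ`, with the modulus written as `exp s`. -/
lemma polar (z : ℂˣ) : ∃ s : ℝ, ∃ κ : Circle, z = posUnit s * Circle.toUnits κ := by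
  have hz : (0 : ℝ) < ‖(z : ℂ)‖ := norm_pos_iff.2 z.ne_zero
  refine ⟨Real.log ‖(z : ℂ)‖, Circle.exp (Complex.arg z), ?_⟩
  ext
  simp only [Units.val_mul, coe_posUnit, Real.exp_log hz, Circle.toUnits_apply, Units.val_mk0,
    Circle.coe_exp]
  exact (Complex.norm_mul_exp_arg_mul_I z).symm

/-- Uniqueness of polar coordinates. -/
lemma polar_inj {s t : ℝ} {κ κ' : Circle}
    (h : posUnit s * Circle.toUnits κ = posUnit t * Circle.toUnits κ') : s = t ∧ κ = κ' := by
  have h0 : (Real.exp s : ℂ) * (κ : ℂ) = Real.exp t * (κ' : ℂ) := congrArg Units.val h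
  have h1 : s = t := by
    have := congrArg norm h0
    rw [norm_mul, norm_mul, Circle.norm_coe, Circle.norm_coe, mul_one, mul_one,
      Complex.norm_of_nonneg (Real.exp_pos s).le, Complex.norm_of_nonneg (Real.exp_pos t).le] at this
    exact Real.exp_injective this
  subst h1
  refine ⟨rfl, Circle.ext ?_⟩
  exact mul_left_cancel₀ (by exact_mod_cast (Real.exp_pos s).ne') h0

/-! ### `Γ` is closed and countable -/

/-- Coordinates on `ℤ[√(-d)]`. -/
lemma mem_Od_iff (d : ℕ) (z : ℂ) :
    z ∈ Od d ↔ ∃ a b : ℤ, z = a + b * (Complex.I * Real.sqrt d) := by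
  have hsq : (Complex.I * Real.sqrt d) * (Complex.I * Real.sqrt d) = -(d : ℂ) := by
    have : ((Real.sqrt d : ℝ) : ℂ) * (Real.sqrt d : ℝ) = d := by
      rw [← Complex.ofReal_mul, Real.mul_self_sqrt (Nat.cast_nonneg d)]; simp
    linear_combination (Complex.I * Complex.I) * this + (d : ℂ) * Complex.I_mul_I
  constructor
  · intro h
    induction h using Subring.closure_induction with
    | mem x hx => exact ⟨0, 1, by simpa using hx⟩
    | zero => exact ⟨0, 0, by simp⟩
    | one => exact ⟨1, 0, by simp⟩
    | add x y _ _ hx hy =>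
      obtain ⟨a, b, rfl⟩ := hx
      obtain ⟨a', b', rfl⟩ := hy
      exact ⟨a + a', b + b', by push_cast; ring⟩
    | neg x _ hx =>
      obtain ⟨a, b, rfl⟩ := hx
      exact ⟨-a, -b, by push_cast; ring⟩
    | mul x y _ _ hx hy =>
      obtain ⟨a, b, rfl⟩ := hx
      obtain ⟨a', b', rfl⟩ := hy
      refine ⟨a * a' - b * b' * d, a * b' + b * a', ?_⟩
      push_cast
      linear_combination ((b : ℂ) * b') * hsq
  · rintro ⟨a, b, rfl⟩
    exact add_mem (intCast_mem _ a)
      (mul_mem (intCast_mem _ b) (Subring.subset_closure rfl))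

lemma countable_Od (d : ℕ) : (Od d : Set ℂ).Countable := by
  refine (Set.countable_range
    (fun p : ℤ × ℤ => (p.1 : ℂ) + p.2 * (Complex.I * Real.sqrt d))).mono ?_
  intro z hz
  obtain ⟨a, b, h⟩ := (mem_Od_iff d z).1 hz
  exact ⟨(a, b), h.symm⟩

lemma isClosed_Od (d : ℕ) (hd : 0 < d) : IsClosed (Od d : Set ℂ) := by
  have hs : (0 : ℝ) < Real.sqrt d := Real.sqrt_pos.2 (by exact_mod_cast hd)
  have hcl : IsClosed (Set.range ((↑) : ℤ → ℝ)) := Int.isClosedEmbedding_coe_real.isClosed_range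
  have heq : (Od d : Set ℂ) = {z : ℂ | z.re ∈ Set.range ((↑) : ℤ → ℝ)} ∩
      {z : ℂ | z.im / Real.sqrt d ∈ Set.range ((↑) : ℤ → ℝ)} := by
    ext z
    rw [SetLike.mem_coe, mem_Od_iff]
    constructor
    · rintro ⟨a, b, rfl⟩
      refine ⟨⟨a, by simp⟩, ⟨b, ?_⟩⟩
      simp [hs.ne']
    · rintro ⟨⟨a, ha⟩, ⟨b, hb⟩⟩
      refine ⟨a, b, Complex.ext (by simpa using ha.symm) ?_⟩
      rw [eq_div_iff hs.ne'] at hb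
      simpa using hb.symm
  rw [heq]
  exact (hcl.preimage Complex.continuous_re).inter
    (hcl.preimage (Complex.continuous_im.div_const _))

lemma isClosed_GammaO (d : ℕ) (hd : 0 < d) : IsClosed (GammaO d : Set SL2C) := by
  have : (GammaO d : Set SL2C) = ⋂ i, ⋂ j, {x : SL2C | x.1 i j ∈ (Od d : Set ℂ)} := by
    ext x
    simp only [Set.mem_iInter]
    rfl
  rw [this]
  refine isClosed_iInter fun i => isClosed_iInter fun j => (isClosed_Od d hd).preimage ?_
  exact (continuous_subtype_val.matrix_elem i j :
    Continuous fun x : {A : Matrix (Fin 2) (Fin 2) ℂ // A.det = 1} => x.1 i j)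

lemma countable_GammaO (d : ℕ) : Countable (GammaO d) := by
  have : Countable (Od d) := (countable_Od d).to_subtype
  refine Function.Injective.countable
    (f := fun (x : GammaO d) (i j : Fin 2) => (⟨x.1.1 i j, x.2 i j⟩ : Od d)) ?_
  intro x y h
  apply Subtype.ext
  ext i j
  exact congrArg Subtype.val (congrFun (congrFun h i) j)

/-! ### The circle -/

lemma uncountable_circle : Uncountable Circle := by
  rw [← not_countable_iff, Circle.argEquiv.countable_iff, Set.countable_coe_iff,
    ← Cardinal.le_aleph0_iff_set_countable,
    Cardinal.mk_Ioc_real (by linarith [Real.pi_pos]), not_le]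
  exact Cardinal.aleph0_lt_continuum

/-- The powers of an element of infinite order are dense in the circle. -/
lemma denseRange_zpow_circle (θ : Circle) (hθ : ∀ m : ℕ, 1 ≤ m → θ ^ m ≠ 1) :
    DenseRange (fun n : ℤ => θ ^ n) := by
  have : Fact (0 < 2 * Real.pi) := ⟨Real.two_pi_pos⟩
  have hT : 2 * Real.pi ≠ 0 := Real.two_pi_pos.ne'
  let e := AddCircle.homeomorphCircle hT
  have he : ∀ a, e a = AddCircle.toCircle a := AddCircle.homeomorphCircle_apply hT
  obtain ⟨a, rfl⟩ := e.surjective θ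
  have hd : DenseRange (fun n : ℤ => n • a) := by
    rw [AddCircle.denseRange_zsmul_iff, addOrderOf_eq_zero_iff']
    intro n hn h
    refine hθ n hn ?_
    rw [he, ← AddCircle.toCircle_nsmul, h, AddCircle.toCircle_zero]
  have h2 := e.surjective.denseRange.comp hd e.continuous
  convert h2 using 2 with n
  simp only [Function.comp, he, AddCircle.toCircle_zsmul]

/-! ### Orbits of `A` -/

/-- If `diag(λ, λ⁻¹)` fixes `π(g)` and the angle `θ` of `λ` has infinite order, then every
`A`-orbit in `C·π(g)` is dense in it: the powers of `θ` are dense in the circle, and rotating by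
`θ ^ n` moves `π(g)` only along `A`. -/
lemma subset_closure_orbit (d : ℕ) (g : SL2C) (s : ℝ) (θ : Circle)
    (hθ : ∀ m : ℕ, 1 ≤ m → θ ^ m ≠ 1)
    (hfix : diagHom (posUnit s * Circle.toUnits θ) • (QuotientGroup.mk g : SL2C ⧸ GammaO d) =
      QuotientGroup.mk g)
    (y : SL2C ⧸ GammaO d) (hy : y ∈ (· • (QuotientGroup.mk g : SL2C ⧸ GammaO d)) '' Cdiag) :
    (· • (QuotientGroup.mk g : SL2C ⧸ GammaO d)) '' Cdiag ⊆ closure ((· • y) '' Apos) := by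
  set x : SL2C ⧸ GammaO d := QuotientGroup.mk g with hx
  obtain ⟨_, hc, rfl⟩ := hy
  obtain ⟨z₀, rfl⟩ := (mem_Cdiag_iff _).1 hc
  rintro _ ⟨_, hc', rfl⟩
  obtain ⟨z, rfl⟩ := (mem_Cdiag_iff _).1 hc'
  show diagHom z • x ∈ closure ((· • (diagHom z₀ • x)) '' Apos)
  obtain ⟨r, κ, hr⟩ := polar (z * z₀⁻¹)
  have hz : z = posUnit r * Circle.toUnits κ * z₀ := by rw [← hr]; simp
  let F : Circle → SL2C ⧸ GammaO d := fun w => diagHom (posUnit r * Circle.toUnits w * z₀) • x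
  have hu : Continuous (fun w : Circle => Circle.toUnits w) := by
    rw [Units.continuous_iff]
    refine ⟨continuous_subtype_val, ?_⟩
    have : (fun w : Circle => (((Circle.toUnits w)⁻¹ : ℂˣ) : ℂ)) =
        fun w => ((w⁻¹ : Circle) : ℂ) := by
      funext w; rw [← map_inv, Circle.toUnits_apply, Units.val_mk0]
    rw [this]
    exact continuous_subtype_val.comp (continuous_inv (G := Circle))
  have hF : Continuous F := by
    have h1 : Continuous fun w : Circle =>
        diagHom (posUnit r * Circle.toUnits w * z₀) :=
      continuous_diagHom.comp ((continuous_const.mul hu).mul continuous_const)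
    exact h1.smul (continuous_const (y := x))
  have hmem : F κ ∈ closure (F '' Set.range (fun n : ℤ => θ ^ n)) :=
    hF.range_subset_closure_image_dense (denseRange_zpow_circle θ hθ) ⟨κ, rfl⟩
  have hFκ : F κ = diagHom z • x := by rw [hz]
  rw [← hFκ]
  refine closure_mono ?_ hmem
  rintro _ ⟨_, ⟨n, rfl⟩, rfl⟩
  -- `θ ^ n` differs from `(posUnit s * θ) ^ n`, which fixes `x`, by an element of `A`.
  have hfixn : diagHom ((posUnit s * Circle.toUnits θ) ^ n) • x = x := by
    rw [map_zpow]
    exact zpow_mem (MulAction.mem_stabilizer_iff.2 hfix : _ ∈ MulAction.stabilizer SL2C x) n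
  refine ⟨diagHom (posUnit (r - n • s)), (mem_Apos_iff _).2 ⟨_, rfl⟩, ?_⟩
  show diagHom (posUnit (r - n • s)) • diagHom z₀ • x =
    diagHom (posUnit r * Circle.toUnits (θ ^ n) * z₀) • x
  have hsplit : posUnit r * Circle.toUnits (θ ^ n) * z₀ =
      posUnit (r - n • s) * z₀ * (posUnit s * Circle.toUnits θ) ^ n := by
    have : posUnit r = posUnit (r - n • s) * posUnit s ^ n := by
      rw [← posUnit_zsmul, ← posUnit_add, sub_add_cancel]
    rw [this, map_zpow, mul_zpow]
    simp only [mul_assoc, mul_comm, mul_left_comm]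
  rw [hsplit, map_mul, mul_smul, hfixn, map_mul, mul_smul]

/-- If a nontrivial element of `A` fixes `π(g)`, then the orbit `A·π(g)` is the image of a compact
interval, and this image is closed. -/
lemma closure_orbit_subset (d : ℕ) (hd : 0 < d) (g : SL2C) (L : ℝ) (hL : 0 < L)
    (hfix : diagHom (posUnit L) • (QuotientGroup.mk g : SL2C ⧸ GammaO d) =
      QuotientGroup.mk g) :
    closure ((· • (QuotientGroup.mk g : SL2C ⧸ GammaO d)) '' Apos) ⊆
      (fun t => diagHom (posUnit t) • (QuotientGroup.mk g : SL2C ⧸ GammaO d)) ''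
        Set.Icc 0 L := by
  set x : SL2C ⧸ GammaO d := QuotientGroup.mk g with hx
  refine closure_minimal ?_ ?_
  · rintro _ ⟨_, ha, rfl⟩
    obtain ⟨s, rfl⟩ := (mem_Apos_iff _).1 ha
    obtain ⟨n, hn, -⟩ := existsUnique_sub_zsmul_mem_Ico hL s 0
    rw [zero_add] at hn
    refine ⟨s - n • L, Set.Ico_subset_Icc_self hn, ?_⟩
    have hfixn : diagHom (posUnit L ^ n) • x = x := by
      rw [map_zpow]
      exact zpow_mem (MulAction.mem_stabilizer_iff.2 hfix : _ ∈ MulAction.stabilizer SL2C x) n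
    show diagHom (posUnit (s - n • L)) • x = diagHom (posUnit s) • x
    conv_rhs => rw [← sub_add_cancel s (n • L), posUnit_add, posUnit_zsmul, map_mul, mul_smul,
      hfixn]
  · -- The preimage in `G` is the product of a compact set and the closed set `gΓ`.
    rw [← (QuotientGroup.isQuotientMap_mk (GammaO d)).isClosed_preimage]
    have hK : IsCompact ((fun t => diagHom (posUnit t)) '' Set.Icc (0 : ℝ) L) :=
      isCompact_Icc.image (continuous_diagHom.comp continuous_posUnit)
    have hcl : IsClosed ((g * ·) '' (GammaO d : Set SL2C)) :=
      (Homeomorph.mulLeft g).isClosedMap _ (isClosed_GammaO d hd)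
    convert hcl.mul_left_of_isCompact hK using 1
    ext h
    simp only [Set.mem_preimage, Set.mem_image, Set.mem_mul]
    constructor
    · rintro ⟨t, ht, h1⟩
      have h2 : (QuotientGroup.mk (diagHom (posUnit t) * g) : SL2C ⧸ GammaO d) =
        QuotientGroup.mk h := h1
      refine ⟨_, ⟨t, ht, rfl⟩, _, ⟨_, QuotientGroup.eq.1 h2, rfl⟩, ?_⟩
      group
    · rintro ⟨_, ⟨t, ht, rfl⟩, _, ⟨γ, hγ, rfl⟩, rfl⟩
      refine ⟨t, ht, ?_⟩
      show (QuotientGroup.mk (diagHom (posUnit t) * g) : SL2C ⧸ GammaO d) = _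
      rw [QuotientGroup.eq]
      have : (diagHom (posUnit t) * g)⁻¹ * (diagHom (posUnit t) * (g * γ)) = γ := by group
      rw [this]
      exact hγ

/-- If a nontrivial element of `A` fixes `π(g)`, then `A·π(g)` is closed, and it is not all of
`C·π(g)`: otherwise every angle `κ` would be the angle of an element of `C ∩ gΓg⁻¹`, which is
countable. -/
lemma not_subset_closure_orbit (d : ℕ) (hd : 0 < d) (g : SL2C) (L : ℝ) (hL : 0 < L)
    (hfix : diagHom (posUnit L) • (QuotientGroup.mk g : SL2C ⧸ GammaO d) =
      QuotientGroup.mk g) :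
    ¬ ((· • (QuotientGroup.mk g : SL2C ⧸ GammaO d)) '' Cdiag ⊆
      closure ((· • (QuotientGroup.mk g : SL2C ⧸ GammaO d)) '' Apos)) := by
  intro hsub
  have key : ∀ κ : Circle, ∃ t : ℝ, ∃ δ : GammaO d,
      g * δ * g⁻¹ = diagHom (posUnit (-t) * Circle.toUnits κ) := by
    intro κ
    obtain ⟨t, -, ht⟩ := closure_orbit_subset d hd g L hL hfix
      (hsub ⟨diagHom (Circle.toUnits κ), (mem_Cdiag_iff _).2 ⟨_, rfl⟩, rfl⟩)
    have h2 : (QuotientGroup.mk (diagHom (posUnit t) * g) : SL2C ⧸ GammaO d) =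
      QuotientGroup.mk (diagHom (Circle.toUnits κ) * g) := ht
    refine ⟨t, ⟨_, QuotientGroup.eq.1 h2⟩, ?_⟩
    rw [posUnit_neg, map_mul, map_inv]
    group
  choose t δ hδ using key
  have := countable_GammaO d
  have hinj : Function.Injective δ := by
    intro κ κ' h
    have h1 := hδ κ
    rw [h, hδ κ'] at h1
    exact (polar_inj (diagHom_injective h1)).2.symm
  have := uncountable_circle
  exact not_countable (α := Circle) hinj.countable

/-- The characteristic polynomial of a conjugate of `diag(w, w⁻¹)`. -/
lemma det_sub_smul (g γ : SL2C) (w : ℂˣ) (h : diagHom w = g * γ * g⁻¹) (μ : ℂ) :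
    ((γ : Matrix (Fin 2) (Fin 2) ℂ) - μ • 1).det = (w - μ) * ((w⁻¹ : ℂˣ) - μ) := by
  have h1 : (γ : Matrix (Fin 2) (Fin 2) ℂ) - μ • 1 =
      ((g⁻¹ : SL2C) : Matrix (Fin 2) (Fin 2) ℂ) * ((diagHom w).1 - μ • 1) * g.1 := by
    have h2 : γ = g⁻¹ * diagHom w * g := by rw [h]; group
    have h3 : ((g⁻¹ : SL2C) : Matrix (Fin 2) (Fin 2) ℂ) * g.1 = 1 := by
      rw [← Matrix.SpecialLinearGroup.coe_mul, inv_mul_cancel, Matrix.SpecialLinearGroup.coe_one]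
    rw [mul_sub, sub_mul, mul_smul_comm, mul_one, smul_mul_assoc, h3]
    conv_lhs => rw [h2]
    rw [Matrix.SpecialLinearGroup.coe_mul, Matrix.SpecialLinearGroup.coe_mul]
  rw [h1, Matrix.det_mul, Matrix.det_mul, (g⁻¹).2, g.2, coe_diagHom, Matrix.det_fin_two]
  simp

/-- Let `γ ∈ Γ = SL_2(ℤ[√(-d)])` be semisimple of infinite order and `g ∈ SL_2(ℂ)` with
`gγg⁻¹ ∈ C`, giving the compact orbit `C·π(g) ⊆ X = SL_2(ℂ)/Γ`. The `A`-action on `C·π(g)`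
is not minimal iff some power `γⁿ` (`n ≥ 1`) has both eigenvalues real. -/
theorem statement_16 (d : ℕ) (hd : 0 < d) (hsf : Squarefree d)
    (γ : SL2C) (hγ : γ ∈ GammaO d)
    (hss : ∃ g : SL2C, (g * γ * g⁻¹).1 0 1 = 0 ∧ (g * γ * g⁻¹).1 1 0 = 0)
    (hio : ∀ m : ℕ, 1 ≤ m → γ ^ m ≠ 1)
    (g : SL2C) (hg : g * γ * g⁻¹ ∈ Cdiag) :
    (∃ y ∈ (· • (QuotientGroup.mk g : SL2C ⧸ GammaO d)) '' Cdiag,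
      ¬ ((· • (QuotientGroup.mk g : SL2C ⧸ GammaO d)) '' Cdiag ⊆
          closure ((· • y) '' Apos))) ↔
    (∃ m : ℕ, 1 ≤ m ∧
      ∀ μ : ℂ, (((γ ^ m : SL2C) : Matrix (Fin 2) (Fin 2) ℂ) - μ • 1).det = 0 → μ.im = 0) := by
  obtain ⟨l, hl⟩ := (mem_Cdiag_iff _).1 hg
  obtain ⟨s, κ, rfl⟩ := polar l
  set l : ℂˣ := posUnit s * Circle.toUnits κ with hldef
  have hpow : ∀ m : ℕ, diagHom (l ^ m) = g * γ ^ m * g⁻¹ := fun m => by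
    rw [map_pow, hl, conj_pow]
  have hlpow : ∀ m : ℕ, l ^ m = posUnit (m • s) * Circle.toUnits (κ ^ m) := fun m => by
    rw [hldef, mul_pow, map_pow, ← natCast_zsmul, posUnit_zsmul, zpow_natCast]
  have hfix : ∀ m : ℕ, diagHom (l ^ m) • (QuotientGroup.mk g : SL2C ⧸ GammaO d) =
      QuotientGroup.mk g := by
    intro m
    show (QuotientGroup.mk (diagHom (l ^ m) * g) : SL2C ⧸ GammaO d) = QuotientGroup.mk g
    rw [eq_comm, QuotientGroup.eq, hpow]
    have : g⁻¹ * (g * γ ^ m * g⁻¹ * g) = γ ^ m := by group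
    rw [this]
    exact pow_mem hγ m
  constructor
  · rintro ⟨y, hy, hns⟩
    by_contra! hno
    refine hns (subset_closure_orbit d g s κ (fun m hm hκ => ?_) (by rw [← hldef]; exact pow_one l ▸ hfix 1) y hy)
    obtain ⟨μ, hμ, him⟩ := hno m hm
    rw [det_sub_smul g _ _ (hpow m), hlpow, hκ, map_one, mul_one, ← posUnit_neg,
      coe_posUnit, coe_posUnit, mul_eq_zero, sub_eq_zero, sub_eq_zero] at hμ
    rcases hμ with rfl | rfl
    · exact him (Complex.ofReal_im _)
    · exact him (Complex.ofReal_im _)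
  · rintro ⟨m, hm, hreal⟩
    have him : ((l ^ m : ℂˣ) : ℂ).im = 0 := by
      refine hreal _ ?_
      rw [det_sub_smul g _ _ (hpow m), sub_self, zero_mul]
    have him' : ((κ ^ m : Circle) : ℂ).im = 0 := by
      have h : ((l ^ m : ℂˣ) : ℂ) = (Real.exp (m • s) : ℝ) * ((κ ^ m : Circle) : ℂ) :=
        congrArg Units.val (hlpow m)
      rw [h, Complex.im_ofReal_mul] at him
      exact (mul_eq_zero.1 him).resolve_left (Real.exp_pos _).ne'
    -- A real number of modulus one squares to one.
    have hκ : κ ^ (m * 2) = 1 := by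
      have hn := Circle.normSq_coe (κ ^ m)
      rw [Complex.normSq_apply, him', mul_zero, add_zero] at hn
      rw [pow_mul]
      apply Circle.ext
      rw [sq, Circle.coe_mul, Circle.coe_one]
      refine Complex.ext ?_ ?_
      · rw [Complex.mul_re, him', mul_zero, sub_zero, hn, Complex.one_re]
      · rw [Complex.mul_im, him', mul_zero, zero_mul, add_zero, Complex.one_im]
    have hl2 : l ^ (m * 2) = posUnit ((m * 2) • s) := by rw [hlpow, hκ, map_one, mul_one]
    have hs : (m * 2) • s ≠ 0 := by
      intro h0
      refine hio (m * 2) (by omega) ?_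
      have h1 := hpow (m * 2)
      have h2 : posUnit 0 = 1 := by ext; simp [coe_posUnit]
      rw [hl2, h0, h2, map_one, eq_comm, conj_eq_one_iff] at h1
      exact h1
    have hfix2 := hfix (m * 2)
    rw [hl2] at hfix2
    refine ⟨QuotientGroup.mk g, ⟨1, (mem_Cdiag_iff _).2 ⟨1, map_one _⟩, one_smul _ _⟩, ?_⟩
    rcases lt_or_gt_of_ne hs with h | h
    · refine not_subset_closure_orbit d hd g _ (neg_pos.2 h) ?_
      rw [posUnit_neg, map_inv, inv_smul_eq_iff]
      exact hfix2.symm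
    · exact not_subset_closure_orbit d hd g _ h hfix2
end

section
/- Write tr(γ) = a + b√(−d) with a, b ∈ ℤ, and suppose b ≠ 0. Then the polynomial F(x) = x⁴ − 2a·x³ + (a² + b²·d + 2)·x² − 2a·x + 1 is irreducible over ℚ. (Here F(x) = (x² − tr(γ)x + 1)(x² − conj(tr(γ))x + 1), where conj denotes complex conjugation, so the roots of F are the eigenvalues of γ together with their complex conjugates.) -/
/-!
Write `F = (x² - a x + 1)² + b²d x²`. Since `b²d > 0` and `F(0) = 1`, `F` has no real root, hence no
linear factor. By Gauss's lemma (`Polynomial.Monic.irreducible_iff_irreducible_map_fraction_map`)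
a factorisation over `ℚ` yields a monic one over `ℤ`, which must be
`F = (x² + p x + q)(x² + r x + s)` with `q s = 1`, so `q = s = ±1`. If `q = s = 1` then `p + r = -2a`
and `p r = a² + b²d`, so `(p - r)² = -4b²d < 0`; if `q = s = -1` then comparing the `x³` and `x`
coefficients gives `a = 0` and `r = -p`, and the `x²` coefficient reads `-2 - p² = b²d + 2`. Both are
impossible.
-/

open Matrix Pointwise

open Polynomial in
/-- The integral form of `F`, with `e` standing for `b²d`. -/
theorem quartic_irreducible_int (a e : ℤ) (he : 0 < e) :
    Irreducible (X ^ 4 - C (2 * a) * X ^ 3 + C (a ^ 2 + e + 2) * X ^ 2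
      - C (2 * a) * X + 1 : ℤ[X]) := by
  set F : ℤ[X] := X ^ 4 - C (2 * a) * X ^ 3 + C (a ^ 2 + e + 2) * X ^ 2
      - C (2 * a) * X + 1 with hF
  have hdeg : F.natDegree = 4 := by rw [hF]; compute_degree!
  have hmon : F.Monic := by rw [hF]; monicity!
  rw [hmon.irreducible_iff_natDegree']
  refine ⟨fun h => by simp [h] at hdeg, fun f g hf hg hfg hmem => ?_⟩
  rw [hdeg, Finset.mem_Ioc] at hmem
  have hsum : f.natDegree + g.natDegree = 4 := by
    rw [← hf.natDegree_mul hg, hfg, hdeg]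
  obtain h1 | h2 : g.natDegree = 1 ∨ g.natDegree = 2 := by omega
  · have hev : F.eval (-g.coeff 0) = 0 := by
      rw [← hfg, eval_mul, hg.eq_X_add_C h1]
      simp
    simp only [hF, eval_add, eval_sub, eval_mul, eval_pow, eval_X, eval_C, eval_one] at hev
    generalize -g.coeff 0 = x at hev
    have key : (x ^ 2 - a * x + 1) ^ 2 + e * x ^ 2 = 0 := by linear_combination hev
    have hx : x = 0 := by
      by_contra hx
      have := mul_pos he (pow_pos (abs_pos.mpr hx) 2)
      rw [sq_abs] at this
      nlinarith [sq_nonneg (x ^ 2 - a * x + 1)]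
    simp [hx] at key
  · have h2' : f.natDegree = 2 := by omega
    have quad : ∀ u : ℤ[X], u.Monic → u.natDegree = 2 →
        u = X ^ 2 + C (u.coeff 1) * X + C (u.coeff 0) := by
      intro u hu h
      have hc : u.coeff 2 = 1 := h ▸ hu
      conv_lhs => rw [u.as_sum_range_C_mul_X_pow, h]
      simp [Finset.sum_range_succ, hc]
      ring
    rw [quad f hf h2', quad g hg h2] at hfg
    generalize f.coeff 1 = p at hfg
    generalize f.coeff 0 = q at hfg
    generalize g.coeff 1 = r at hfg
    generalize g.coeff 0 = s at hfg
    have hexp : (X ^ 2 + C p * X + C q) * (X ^ 2 + C r * X + C s) =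
        X ^ 4 + C (p + r) * X ^ 3 + C (q + s + p * r) * X ^ 2 + C (p * s + q * r) * X
          + C (q * s) := by
      simp only [map_add, map_mul]
      ring
    rw [hexp, hF] at hfg
    have c0 := congrArg (fun u => coeff u 0) hfg
    have c1 := congrArg (fun u => coeff u 1) hfg
    have c2 := congrArg (fun u => coeff u 2) hfg
    have c3 := congrArg (fun u => coeff u 3) hfg
    simp only [coeff_add, coeff_sub, coeff_C_mul, coeff_X_pow, coeff_X, coeff_C, coeff_one]
      at c0 c1 c2 c3
    norm_num at c0 c1 c2 c3
    obtain ⟨rfl, rfl⟩ | ⟨rfl, rfl⟩ := Int.mul_eq_one_iff_eq_one_or_neg_one.mp c0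
    · have hr : r = -(2 * a) - p := by linarith
      subst hr
      nlinarith [sq_nonneg (p + a)]
    · have ha : a = 0 := by linarith
      have hr : r = -p := by linarith
      subst ha hr
      nlinarith [sq_nonneg p]

/-- Let `γ ∈ SL_2(ℤ[√(-d)])` be semisimple of infinite order with
`tr(γ) = a + b√(-d)` and `b ≠ 0`. Then
`F(x) = x⁴ - 2a x³ + (a² + b²d + 2) x² - 2a x + 1` is irreducible over `ℚ`. -/
theorem statement_18 (d : ℕ) (hd : 0 < d) (hsf : Squarefree d)
    (γ : SL2C) (hγ : γ ∈ GammaO d)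
    (hss : ∃ g : SL2C, (g * γ * g⁻¹).1 0 1 = 0 ∧ (g * γ * g⁻¹).1 1 0 = 0)
    (hio : ∀ m : ℕ, 1 ≤ m → γ ^ m ≠ 1)
    (a b : ℤ)
    (htr : γ.1 0 0 + γ.1 1 1 = (a : ℂ) + (b : ℂ) * (Complex.I * (Real.sqrt d : ℂ)))
    (hb : b ≠ 0) :
    Irreducible (Polynomial.X ^ 4 - Polynomial.C ((2 * a : ℤ) : ℚ) * Polynomial.X ^ 3
      + Polynomial.C ((a ^ 2 + b ^ 2 * (d : ℤ) + 2 : ℤ) : ℚ) * Polynomial.X ^ 2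
      - Polynomial.C ((2 * a : ℤ) : ℚ) * Polynomial.X + 1) := by
  have he : 0 < b ^ 2 * (d : ℤ) := by positivity
  have h := quartic_irreducible_int a (b ^ 2 * (d : ℤ)) he
  rw [Polynomial.Monic.irreducible_iff_irreducible_map_fraction_map (K := ℚ) (by monicity!)] at h
  simpa [map_ofNat Polynomial.C] using h
end
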